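/- Let G be a finite group, C a conjugacy class of G, and η a finite-dimensional complex representation of G with character χ^η and dimension d_η. Define the function f_C on Irr(G) by f_C(ρ) = |C|^{1/2}·χ^ρ(C)/d_ρ, where χ^ρ(C) is the common value of the character of ρ on C. Let K be the tensor product Markov chain on Irr(G) associated to η, started at the trivial representation 𝟙. Then for all integers r ≥ 0 and s ≥ 0, Σ_{ρ∈Irr(G)} K^r(𝟙,ρ)·f_C(ρ)^s = |C|^{s/2} · |C|^{-s} · Σ_{(c_1,…,c_s)∈C^s} (χ^η(c_1⋯c_s)/d_η)^r; equivalently, E_{K^r}[(f_C)^s] = |C|^{s/2}·Σ_T p_{s,C}(T)·(χ^η(T)/d_η)^r, where the sum is over conjugacy classes T of G and p_{s,C}(T) is the probability that the product of s independent uniformly random elements of C lies in T. -/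

import Mathlib

/-!
For fixed `g`, the character ratios `ρ ↦ χ^ρ(g)/d_ρ` form an eigenvector of the chain with
eigenvalue `χ^η(g)/d_η`: decompose `χ^λ χ^η` into irreducible characters. On the other hand, by
Schur's lemma `∑_{c ∈ C} ρ(c)` is a scalar, namely `|C| χ^ρ(C)/d_ρ`, so the normalised trace of its
`s`-th power writes `(|C| χ^ρ(C)/d_ρ)^s` as the sum of the ratios `χ^ρ(c₁⋯c_s)/d_ρ` over `C^s`.
Hence each power of `f_C` is a combination of eigenvectors, on which `K^r` acts termwise.
-/

open CategoryTheory MonoidalCategory Finset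

noncomputable section

/-- The multiplicity of the irreducible representation `ρ` in a finite-dimensional
representation `W`: the dimension of the space of `G`-equivariant maps `ρ ⟶ W`
(by Schur's lemma this equals the multiplicity of `ρ` in a decomposition of `W`
into irreducibles). -/
def multIn {G : Type} [Monoid G] (ρ W : FDRep ℂ G) : ℕ :=
  Module.finrank ℂ (ρ ⟶ W)

/-- The transition matrix of the tensor product Markov chain on (an index set `ι` for)
the irreducible representations of `G` associated with a fixed representation `η`:
`K(λ,ρ) = m_ρ(λ⊗η)·d_ρ/(d_λ·d_η)`. -/
def tensorChain {G : Type} [Monoid G] {ι : Type} (rep : ι → FDRep ℂ G) (η : FDRep ℂ G) :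
    Matrix ι ι ℝ := fun l r =>
  (multIn (rep r) (MonoidalCategory.tensorObj (rep l) η) * Module.finrank ℂ (rep r) : ℝ) /
    (Module.finrank ℂ (rep l) * Module.finrank ℂ η)

/-- The Plancherel measure `π(ρ) = d_ρ²/|G|` on the irreducible representations of `G`. -/
def plancherel {G : Type} [Monoid G] [Fintype G] {ι : Type} (rep : ι → FDRep ℂ G) (i : ι) :
    ℝ :=
  (Module.finrank ℂ (rep i) : ℝ) ^ 2 / (Fintype.card G : ℝ)

/-- The total variation distance between two probability distributions on a finite set:
`‖P − Q‖_TV = (1/2)·Σ_x |P x − Q x|`. -/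
def tvDist {X : Type*} [Fintype X] (P Q : X → ℝ) : ℝ :=
  (1 / 2) * ∑ x, |P x - Q x|

section Algebra

theorem sum_pow_eq_sum_piFinset_prod_ofFn {α R : Type*} [Semiring R] (S : Finset α) (f : α → R)
    (s : ℕ) :
    (∑ a ∈ S, f a) ^ s =
      ∑ c ∈ Fintype.piFinset (fun _ : Fin s => S), (List.ofFn fun i => f (c i)).prod := by
  induction s with
  | zero => simp
  | succ s ih =>
    rw [pow_succ', ih, sum_mul_sum, ← sum_product']
    refine sum_equiv (Fin.consEquiv fun _ => α) (fun x => ?_) fun x _ => ?_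
    · simp [Fin.consEquiv, Fin.forall_fin_succ]
    · simp [Fin.consEquiv, List.ofFn_succ]

theorem commute_sum_map_of_conj_mem {G R : Type*} [Group G] [Semiring R] (φ : G →* R)
    {S : Finset G} (hS : ∀ g, ∀ c ∈ S, g * c * g⁻¹ ∈ S) (g : G) :
    Commute (φ g) (∑ c ∈ S, φ c) := by
  rw [Commute, SemiconjBy, mul_sum, sum_mul]
  refine sum_nbij' (fun c => g * c * g⁻¹) (fun c => g⁻¹ * c * g) (hS g)
    (fun c hc => by simpa using hS g⁻¹ c hc) ?_ ?_ ?_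
  · intros; group
  · intros; group
  · intros; simp [← map_mul]

theorem pow_mulVec_eq_smul_of_mulVec_eq_smul {n R : Type*} [Fintype n] [DecidableEq n]
    [CommSemiring R] {A : Matrix n n R} {v : n → R} {a : R} (h : A.mulVec v = a • v) (r : ℕ) :
    (A ^ r).mulVec v = a ^ r • v := by
  induction r with
  | zero => simp
  | succ r ih =>
    rw [pow_succ, ← Matrix.mulVec_mulVec, h, Matrix.mulVec_smul, ih, smul_smul, pow_succ']

theorem exists_isCompl_ne_top_of_not_isSimpleOrder {α : Type*} [Lattice α] [BoundedOrder α]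
    [Nontrivial α] [ComplementedLattice α] (h : ¬ IsSimpleOrder α) :
    ∃ p q : α, IsCompl p q ∧ p ≠ ⊤ ∧ q ≠ ⊤ := by
  obtain ⟨p, hp_bot, hp_top⟩ : ∃ p : α, p ≠ ⊥ ∧ p ≠ ⊤ := by
    by_contra! hp
    exact h { eq_bot_or_eq_top := fun p => or_iff_not_imp_left.mpr (hp p) }
  obtain ⟨q, hpq⟩ := exists_isCompl p
  refine ⟨p, q, hpq, hp_top, ?_⟩
  rintro rfl
  exact hp_bot (eq_bot_of_isCompl_top hpq)

end Algebra

section Decomposition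

universe u v

variable {k : Type u} [Field k] {G : Type v}

theorem character_eq_add_of_isCompl {V : Type*} [Monoid G] [AddCommGroup V] [Module k V]
    [FiniteDimensional k V] {ρ : Representation k G V} {p q : Subrepresentation ρ}
    (h : IsCompl p q) :
    ρ.character = p.toRepresentation.character + q.toRepresentation.character := by
  have hpq : IsCompl p.toSubmodule q.toSubmodule :=
    isCompl_iff.mpr ⟨disjoint_iff.mpr (congrArg Subrepresentation.toSubmodule h.inf_eq_bot),
      codisjoint_iff.mpr (congrArg Subrepresentation.toSubmodule h.sup_eq_top)⟩
  let N : Bool → Submodule k V := fun b => bif b then p.toSubmodule else q.toSubmodule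
  have hN : DirectSum.IsInternal N :=
    (DirectSum.isInternal_submodule_iff_isCompl N (i := true) (j := false) (by decide)
      (by ext b; cases b <;> simp)).mpr hpq
  ext g
  have hmaps : ∀ b, Set.MapsTo (ρ g) (N b) (N b)
    | true => p.apply_mem_toSubmodule g
    | false => q.apply_mem_toSubmodule g
  rw [Representation.character, LinearMap.trace_eq_sum_trace_restrict hN hmaps, Fintype.sum_bool]
  rfl

theorem simple_of_isIrreducible [Monoid G] (V : FDRep k G)
    (hV : Representation.IsIrreducible V.ρ) : Simple V := by
  let F := forget₂ (FDRep k G) (Rep k G) ⋙ Rep.toModuleMonoidAlgebra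
  have : IsSimpleModule (MonoidAlgebra k G) (Representation.asModule V.ρ) := inferInstance
  have : Simple (F.obj V) := simple_iff_isSimpleModule.mpr this
  exact F.simple_of_simple_obj V

/-- A family of representations that contains exactly one member of each isomorphism class of
irreducible representations, so that its index type stands for `Irr(G)`. -/
structure IsIrrepTransversal [Monoid G] {ι : Type*} (rep : ι → FDRep k G) : Prop where
  simple (i : ι) : Simple (rep i)
  exists_iso (V : FDRep k G) : Simple V → ∃ i, Nonempty (V ≅ rep i)
  eq_of_iso (i j : ι) : Nonempty (rep i ≅ rep j) → i = j

variable [Group G] [Finite G] [NeZero (Nat.card G : k)] {ι : Type*} {rep : ι → FDRep k G}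

theorem character_mem_span
    (hrep : ∀ V : FDRep k G, Simple V → ∃ i, Nonempty (V ≅ rep i)) (V : FDRep k G) :
    V.character ∈ Submodule.span k (Set.range fun i => (rep i).character) := by
  induction hn : Module.finrank k V using Nat.strong_induction_on generalizing V with
  | _ n ih =>
  rcases subsingleton_or_nontrivial V with hV | hV
  · have : V.character = 0 := funext fun g => by
      rw [FDRep.character, Subsingleton.elim (V.ρ g) 0, map_zero, Pi.zero_apply]
    exact this ▸ zero_mem _
  by_cases hirr : Representation.IsIrreducible V.ρ
  · obtain ⟨i, ⟨e⟩⟩ := hrep V (simple_of_isIrreducible V hirr)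
    exact FDRep.char_iso e ▸ Submodule.subset_span ⟨i, rfl⟩
  have : Nontrivial (Subrepresentation V.ρ) :=
    ⟨⊥, ⊤, fun h => bot_ne_top (α := Submodule k V) (congrArg Subrepresentation.toSubmodule h)⟩
  obtain ⟨p, q, hpq, hp, hq⟩ := exists_isCompl_ne_top_of_not_isSimpleOrder hirr
  have hlt : ∀ p : Subrepresentation V.ρ, p ≠ ⊤ →
      Module.finrank k (FDRep.of p.toRepresentation) < n := fun p hp =>
    hn ▸ Submodule.finrank_lt fun h => hp (Subrepresentation.toSubmodule_injective h)
  have hadd : V.character = (FDRep.of p.toRepresentation).character +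
      (FDRep.of q.toRepresentation).character := character_eq_add_of_isCompl hpq
  exact hadd ▸ add_mem (ih _ (hlt p hp) _ rfl) (ih _ (hlt q hq) _ rfl)

theorem IsIrrepTransversal.character_eq_sum_finrank_hom [IsAlgClosed k] [Fintype ι]
    (hrep : IsIrrepTransversal rep) (V : FDRep k G) :
    V.character = ∑ i, (Module.finrank k (rep i ⟶ V) : k) • (rep i).character := by
  classical
  have := Fintype.ofFinite G
  have := invertibleOfNonzero (NeZero.ne (Nat.card G : k))
  have := hrep.simple
  obtain ⟨a, ha⟩ := (Submodule.mem_span_range_iff_exists_fun k).mp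
    (character_mem_span hrep.exists_iso V)
  have horth (i j : ι) :
      (Nat.card G : k)⁻¹ * ∑ g, (rep i).character g * (rep j).character g⁻¹ =
        if i = j then 1 else 0 := by
    rw [FDRep.char_orthonormal]
    exact if_congr ⟨hrep.eq_of_iso i j, fun h => h ▸ ⟨Iso.refl _⟩⟩ rfl rfl
  have hcoeff (j : ι) : (Module.finrank k (rep j ⟶ V) : k) = a j := calc
    (Module.finrank k (rep j ⟶ V) : k)
      = (Nat.card G : k)⁻¹ * ∑ g, V.character g * (rep j).character g⁻¹ :=
        (FDRep.scalar_product_char_eq_finrank_equivariant (rep j) V).symm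
    _ = ∑ i, a i * ((Nat.card G : k)⁻¹ *
          ∑ g, (rep i).character g * (rep j).character g⁻¹) := by
        simp only [← ha, Finset.sum_apply, Pi.smul_apply, smul_eq_mul, sum_mul, mul_sum]
        rw [sum_comm]
        simp only [mul_assoc, mul_left_comm]
    _ = a j := by simp only [horth]; simp
  simp only [hcoeff, ha]

end Decomposition

section CharacterRatio

universe u v

variable {k : Type u} [Field k] {G : Type v}

/-- The character ratio `χ(g)/d` of a representation of dimension `d` and character `χ`; it is
`0` when `d` vanishes in `k`. -/
def characterRatio [Monoid G] (V : FDRep k G) (g : G) : k :=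
  V.character g / Module.finrank k V

theorem finrank_ne_zero_of_simple [Monoid G] (V : FDRep k G) [Simple V] :
    Module.finrank k V ≠ 0 := by
  intro h
  have : Subsingleton V := Module.finrank_zero_iff.mp h
  refine id_nonzero V ?_
  ext x
  exact Subsingleton.elim _ _

variable [IsAlgClosed k]

theorem exists_eq_smul_one_of_commute [Monoid G] (V : FDRep k G) [Simple V] {T : V →ₗ[k] V}
    (hT : ∀ g, Commute (V.ρ g) T) : ∃ a : k, T = a • 1 := by
  let f : V ⟶ V := FDRep.forget₂HomLinearEquiv V V (Rep.ofHom ⟨T, fun g => (hT g).eq.symm⟩)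
  obtain ⟨a, ha⟩ := (finrank_eq_one_iff_of_nonzero' (𝟙 V) (id_nonzero V)).mp
    (finrank_endomorphism_simple_eq_one k V) f
  exact ⟨a, congrArg (fun f : V ⟶ V => f.hom.hom.hom) ha.symm⟩

variable [CharZero k]

theorem trace_pow_div_finrank_of_commute [Monoid G] (V : FDRep k G) [Simple V] {T : V →ₗ[k] V}
    (hT : ∀ g, Commute (V.ρ g) T) (s : ℕ) :
    LinearMap.trace k V (T ^ s) / Module.finrank k V =
      (LinearMap.trace k V T / Module.finrank k V) ^ s := by
  have hd : (Module.finrank k V : k) ≠ 0 := Nat.cast_ne_zero.mpr (finrank_ne_zero_of_simple V)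
  obtain ⟨a, rfl⟩ := exists_eq_smul_one_of_commute V hT
  simp [smul_pow, hd]

theorem sum_characterRatio_prod_ofFn [Group G] (V : FDRep k G) [Simple V] {S : Finset G}
    (hS : ∀ g, ∀ c ∈ S, g * c * g⁻¹ ∈ S) (s : ℕ) :
    ∑ c ∈ Fintype.piFinset (fun _ : Fin s => S), characterRatio V (List.ofFn c).prod =
      (∑ c ∈ S, characterRatio V c) ^ s := by
  have hprod (c : Fin s → G) : (List.ofFn fun i => V.ρ (c i)).prod = V.ρ (List.ofFn c).prod := by
    rw [map_list_prod, List.map_ofFn, Function.comp_def]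
  have htrace := trace_pow_div_finrank_of_commute V (commute_sum_map_of_conj_mem V.ρ hS) s
  rw [sum_pow_eq_sum_piFinset_prod_ofFn] at htrace
  simp only [hprod, map_sum, sum_div] at htrace
  exact htrace

end CharacterRatio

section TensorChain

theorem sqrt_card_mul_characterRatio_pow {G : Type*} [Group G] (V : FDRep ℂ G) [Simple V]
    {g₀ : G} {C : Finset G}
    (hC : ∀ h, h ∈ C ↔ IsConj g₀ h) (s : ℕ) :
    ((Real.sqrt C.card : ℂ) * characterRatio V g₀) ^ s =
      ((Real.sqrt C.card ^ s : ℝ) : ℂ) / (C.card : ℂ) ^ s *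
        ∑ c ∈ Fintype.piFinset (fun _ : Fin s => C), characterRatio V (List.ofFn c).prod := by
  have hcard : (C.card : ℂ) ≠ 0 :=
    Nat.cast_ne_zero.mpr (card_ne_zero_of_mem ((hC g₀).mpr (IsConj.refl g₀)))
  have hconj (g c : G) (hc : c ∈ C) : g * c * g⁻¹ ∈ C :=
    (hC _).mpr (((hC c).mp hc).trans (isConj_iff.mpr ⟨g, rfl⟩))
  have hconst (c : G) (hc : c ∈ C) : characterRatio V c = characterRatio V g₀ := by
    obtain ⟨x, rfl⟩ := isConj_iff.mp ((hC c).mp hc)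
    rw [characterRatio, FDRep.char_conj, characterRatio]
  rw [sum_characterRatio_prod_ofFn V hconj, sum_congr rfl hconst, sum_const, nsmul_eq_mul,
    mul_pow, mul_pow, Complex.ofReal_pow, ← mul_assoc, div_mul_cancel₀ _ (pow_ne_zero s hcard)]

variable {G : Type} [Group G] [Finite G] {ι : Type} [Fintype ι] {rep : ι → FDRep ℂ G}

theorem IsIrrepTransversal.tensorChain_mulVec_characterRatio (hrep : IsIrrepTransversal rep)
    (η : FDRep ℂ G) (g : G) :
    ((tensorChain rep η).map Complex.ofRealHom).mulVec (fun i => characterRatio (rep i) g) =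
      characterRatio η g • fun i => characterRatio (rep i) g := by
  have := hrep.simple
  have hd (i : ι) : (Module.finrank ℂ (rep i) : ℂ) ≠ 0 :=
    Nat.cast_ne_zero.mpr (finrank_ne_zero_of_simple (rep i))
  ext l
  calc ∑ i, (tensorChain rep η l i : ℂ) * characterRatio (rep i) g
    _ = ∑ i, (multIn (rep i) (rep l ⊗ η) : ℂ) * (rep i).character g /
          (Module.finrank ℂ (rep l) * Module.finrank ℂ η) := by
        refine sum_congr rfl fun i _ => ?_
        simp only [tensorChain, characterRatio]
        push_cast
        rw [div_mul_div_comm, mul_right_comm, mul_div_mul_right _ _ (hd i)]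
    _ = (rep l ⊗ η).character g / (Module.finrank ℂ (rep l) * Module.finrank ℂ η) := by
        rw [hrep.character_eq_sum_finrank_hom (rep l ⊗ η), ← sum_div]
        simp [multIn]
    _ = characterRatio η g * characterRatio (rep l) g := by
        rw [FDRep.char_tensor, Pi.mul_apply, ← div_mul_div_comm, mul_comm]
        rfl

theorem IsIrrepTransversal.sum_tensorChain_pow_mul_characterRatio [DecidableEq ι]
    (hrep : IsIrrepTransversal rep) (η : FDRep ℂ G) (g : G) (r : ℕ) (l : ι) :
    ∑ i, ((tensorChain rep η ^ r) l i : ℂ) * characterRatio (rep i) g =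
      characterRatio η g ^ r * characterRatio (rep l) g := by
  have h := pow_mulVec_eq_smul_of_mulVec_eq_smul (hrep.tensorChain_mulVec_characterRatio η g) r
  rw [← Matrix.map_pow] at h
  exact congrFun h l

theorem moments_fC_general [DecidableEq ι] (hrep : IsIrrepTransversal rep) (l : ι)
    (η : FDRep ℂ G) {g₀ : G} {C : Finset G} (hC : ∀ h, h ∈ C ↔ IsConj g₀ h) (r s : ℕ) :
    ∑ ρ, ((tensorChain rep η ^ r) l ρ : ℂ) *
        ((Real.sqrt C.card : ℂ) * characterRatio (rep ρ) g₀) ^ s =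
      ((Real.sqrt C.card ^ s : ℝ) : ℂ) / (C.card : ℂ) ^ s *
        ∑ c ∈ Fintype.piFinset (fun _ : Fin s => C),
          characterRatio η (List.ofFn c).prod ^ r *
            characterRatio (rep l) (List.ofFn c).prod := by
  have := hrep.simple
  simp only [sqrt_card_mul_characterRatio_pow _ hC,
    ← hrep.sum_tensorChain_pow_mul_characterRatio, mul_sum]
  rw [sum_comm]
  simp only [mul_left_comm]

end TensorChain

/-- **Proposition (moments of `f_C` under the tensor product chain).**  Let `G` be a finite
group, `rep` a complete list of pairwise non-isomorphic irreducible complex representations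
of `G` (indexed by `ι`), `triv` the index of the trivial representation, and `η` a
finite-dimensional complex representation of `G`.  Let `C` be the conjugacy class of
`g₀ ∈ G` and let `f_C(ρ) = |C|^{1/2}·χ^ρ(C)/d_ρ`.  Then for all `r, s ≥ 0`,
`E_{K^r}[(f_C)^s] = Σ_ρ K^r(𝟙,ρ)·f_C(ρ)^s
   = |C|^{s/2}·|C|^{-s}·Σ_{(c_1,…,c_s)∈C^s} (χ^η(c_1⋯c_s)/d_η)^r`. -/
theorem moments_fC {G : Type} [Group G] [Fintype G] [DecidableEq G]
    {ι : Type} [Fintype ι] [DecidableEq ι]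
    (rep : ι → FDRep ℂ G)
    (hsimple : ∀ i, Simple (rep i))
    (hcomplete : ∀ V : FDRep ℂ G, Simple V → ∃ i, Nonempty (V ≅ rep i))
    (hinj : ∀ i j : ι, Nonempty (rep i ≅ rep j) → i = j)
    (triv : ι) (htriv : ∀ g : G, (rep triv).character g = 1)
    (η : FDRep ℂ G)
    (g₀ : G) (C : Finset G) (hC : ∀ h, h ∈ C ↔ IsConj g₀ h)
    (r s : ℕ) :
    ∑ ρ, ((tensorChain rep η ^ r) triv ρ : ℂ) *
        ((Real.sqrt C.card : ℂ) * (rep ρ).character g₀ /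
          (Module.finrank ℂ (rep ρ) : ℂ)) ^ s =
      ((Real.sqrt C.card ^ s : ℝ) : ℂ) / (C.card : ℂ) ^ s *
        ∑ c ∈ Fintype.piFinset (fun _ : Fin s => C),
          (η.character (List.ofFn c).prod / (Module.finrank ℂ η : ℂ)) ^ r := by
  have hratio (g : G) : characterRatio (rep triv) g = 1 := by
    rw [characterRatio, ← FDRep.char_one, htriv, htriv, div_one]
  have h := moments_fC_general ⟨hsimple, hcomplete, hinj⟩ triv η hC r s
  simp only [hratio, mul_one] at h
  simpa only [characterRatio, mul_div_assoc] using h
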